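/- The upper bound is tight: let S, S' be finite sets with |S| = |S'| = n, q = 1 − |S∩S'|/n, and let p ∈ [0,1] with p·n an integer and p + q ≤ 1. Then there exists h: universe → {0,1} with E_{Z∼uniform(S)}[h] = p and E_{Z∼uniform(S')}[h] = p + q. -/

import Mathlib

section

variable {α : Type*} [DecidableEq α]

theorem exists_card_inter_eq_and_card_inter_eq_add {s t : Finset α} {k : ℕ}
    (hk : k ≤ (s ∩ t).card) :
    ∃ u : Finset α, (s ∩ u).card = k ∧ (t ∩ u).card = k + (t \ s).card := by
  obtain ⟨v, hv, rfl⟩ := Finset.exists_subset_card_eq hk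
  obtain ⟨hvs, hvt⟩ := Finset.subset_inter_iff.mp hv
  have inter_left : s ∩ (v ∪ t \ s) = v := by
    rw [Finset.inter_union_distrib_left, Finset.inter_sdiff_self, Finset.union_empty,
      Finset.inter_eq_right.mpr hvs]
  have inter_right : t ∩ (v ∪ t \ s) = v ∪ t \ s :=
    Finset.inter_eq_right.mpr (Finset.union_subset hvt Finset.sdiff_subset)
  have disjoint : Disjoint v (t \ s) := Finset.disjoint_sdiff.mono_left hvs
  exact ⟨v ∪ t \ s, by rw [inter_left],
    by rw [inter_right, Finset.card_union_of_disjoint disjoint]⟩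

theorem sum_indicator_one_eq_card_inter {R : Type*} [AddCommMonoidWithOne R] (s u : Finset α) :
    ∑ z ∈ s, (u : Set α).indicator (1 : α → R) z = ((s ∩ u).card : R) := by
  simp only [Finset.sum_indicator_eq_sum_inter, Pi.one_apply, Finset.sum_const, nsmul_one]

theorem one_sub_card_inter_div_card {K : Type*} [DivisionRing K] [CharZero K] (s : Finset α)
    {t : Finset α} (ht : t.Nonempty) :
    1 - ((s ∩ t).card : K) / t.card = ((t \ s).card : K) / t.card := by
  have card_ne_zero : (t.card : K) ≠ 0 := Nat.cast_ne_zero.mpr ht.card_ne_zero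
  have card_add : ((t \ s).card : K) + (s ∩ t).card = t.card := by
    rw [Finset.inter_comm]
    exact_mod_cast Finset.card_sdiff_add_card_inter t s
  rw [sub_eq_iff_eq_add, ← add_div, card_add, div_self card_ne_zero]

end

/-- Tightness of the upper bound: if `|S| = |S'| = n`, `q = 1 − |S∩S'|/n`,
`p·n` is an integer and `p + q ≤ 1`, there is a `{0,1}`-valued `h` with mean `p` under
uniform(S) and mean `p + q` under uniform(S'). -/
theorem upper_bound_tight {α : Type*} [DecidableEq α]
    (S S' : Finset α) (hS : S.Nonempty) (hS' : S'.Nonempty)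
    (n : ℕ) (hSn : S.card = n) (hS'n : S'.card = n)
    (p q : ℝ) (hq : q = 1 - ((S ∩ S').card : ℝ) / (n : ℝ))
    (hp : p ∈ Set.Icc (0 : ℝ) 1) (hint : ∃ k : ℕ, p * (n : ℝ) = (k : ℝ))
    (hpq : p + q ≤ 1) :
    ∃ h : α → ℝ, (∀ z, h z = 0 ∨ h z = 1) ∧
      (∑ z ∈ S, h z) / (n : ℝ) = p ∧
      (∑ z ∈ S', h z) / (n : ℝ) = p + q := by
  obtain ⟨k, hk⟩ := hint
  have n_pos : (0 : ℝ) < n := by exact_mod_cast hSn ▸ hS.card_pos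
  have p_eq : p = k / n := eq_div_of_mul_eq n_pos.ne' hk
  have q_eq : q = (S' \ S).card / n := by
    rw [hq, ← hS'n, one_sub_card_inter_div_card S hS']
  have k_le : k ≤ (S ∩ S').card := by
    have div_le_div : (k : ℝ) / n ≤ (S ∩ S').card / n := by linarith only [p_eq, hq, hpq]
    exact_mod_cast (div_le_div_iff_of_pos_right n_pos).mp div_le_div
  obtain ⟨U, hSU, hS'U⟩ := exists_card_inter_eq_and_card_inter_eq_add k_le
  refine ⟨(U : Set α).indicator 1, fun z ↦ Set.indicator_eq_zero_or_self _ _ z, ?_, ?_⟩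
  · rw [sum_indicator_one_eq_card_inter, hSU, p_eq]
  · rw [sum_indicator_one_eq_card_inter, hS'U, p_eq, q_eq, Nat.cast_add, add_div]
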